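/- Let S be a subset of Baire space ℕ^ℕ. If S is Δ⁰₂-guessable, then there are families (X_{i,j})_{i,j∈ℕ} and (Y_{i,j})_{i,j∈ℕ} of subsets of ℕ^ℕ, each of which is both Fσ and Gδ, such that S = ⋃_{i∈ℕ} ⋂_{j∈ℕ} X_{i,j} and S = ⋂_{i∈ℕ} ⋃_{j∈ℕ} Y_{i,j}. (This is the m = 2 case of Proposition 11.) -/

import Mathlib

/-- `A` is both Fσ (a countable union of closed sets) and Gδ (a countable
intersection of open sets). -/
def IsFsigmaGdelta (A : Set (ℕ → ℕ)) : Prop :=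
  (∃ F : ℕ → Set (ℕ → ℕ), (∀ n, IsClosed (F n)) ∧ A = ⋃ n, F n) ∧
  (∃ U : ℕ → Set (ℕ → ℕ), (∀ n, IsOpen (U n)) ∧ A = ⋂ n, U n)

/-- `S` is Δ⁰₂-guessable: there are a sequence of sets `C n`, each both Fσ and Gδ,
and a guesser `G`, fed the characteristic values `χ_{C 0} f, …, χ_{C n} f`, whose
guesses are eventually `1` when `f ∈ S` and eventually `0` when `f ∉ S`. -/
def Delta2Guessable (S : Set (ℕ → ℕ)) : Prop :=
  ∃ C : ℕ → Set (ℕ → ℕ), (∀ n, IsFsigmaGdelta (C n)) ∧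
    ∃ G : List ℕ → ℕ, ∀ f : ℕ → ℕ,
      (f ∈ S → ∀ᶠ n in Filter.atTop,
        G (List.ofFn fun i : Fin (n + 1) => (C i).indicator (fun _ => 1) f) = 1) ∧
      (f ∉ S → ∀ᶠ n in Filter.atTop,
        G (List.ofFn fun i : Fin (n + 1) => (C i).indicator (fun _ => 1) f) = 0)

/-!
Call `A n` the set of points at which the `n`-th guess is `1`. The guess depends only on which of
`C 0, …, C n` contain the point, so `A n` is a finite Boolean combination of these sets and is again
both Fσ and Gδ. That the guesses converge to membership in `S` says that `S` is at once the limit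
inferior `⋃ i, ⋂ j, A (j + i)` and the limit superior `⋂ i, ⋃ j, A (j + i)` of the sets `A n`.
-/

open Filter MeasureTheory

section GuessableFrom

variable {α : Type*} {𝒜 : Set (Set α)} {S : Set α}

theorem setOfPred_membership_eq_mem {ι : Type*} [Finite ι] (h𝒜 : IsSetAlgebra 𝒜) {C : ι → Set α}
    (hC : ∀ i, C i ∈ 𝒜) (T : Set ι) : {x | {i | x ∈ C i} = T} ∈ 𝒜 := by
  classical
  have := Fintype.ofFinite ι
  have h_atom : {x | {i | x ∈ C i} = T} =
      ⋂ i ∈ Finset.univ, if i ∈ T then C i else (C i)ᶜ := by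
    ext x
    simp only [Set.mem_ofPred_eq, Set.ext_iff, Set.mem_iInter, Finset.mem_univ, true_imp_iff]
    refine forall_congr' fun i => ?_
    split_ifs with hi <;> simp [hi]
  rw [h_atom]
  refine h𝒜.biInter_mem _ fun i _ => ?_
  split_ifs
  exacts [hC i, h𝒜.compl_mem (hC i)]

theorem setOfPred_membership_mem {ι : Type*} [Finite ι] (h𝒜 : IsSetAlgebra 𝒜) {C : ι → Set α}
    (hC : ∀ i, C i ∈ 𝒜) (P : Set ι → Prop) : {x | P {i | x ∈ C i}} ∈ 𝒜 := by
  classical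
  have := Fintype.ofFinite (Set ι)
  have h_union : {x | P {i | x ∈ C i}} =
      ⋃ T ∈ Finset.univ.filter P, {x | {i | x ∈ C i} = T} := by
    ext x
    simp
  rw [h_union]
  exact h𝒜.biUnion_mem _ fun T _ => setOfPred_membership_eq_mem h𝒜 hC T

theorem setOfPred_ofFn_indicator_mem {M : Type*} [Zero M] {n : ℕ} (h𝒜 : IsSetAlgebra 𝒜)
    {C : Fin n → Set α} (hC : ∀ i, C i ∈ 𝒜) (b : M) (P : List M → Prop) :
    {x | P (List.ofFn fun i => (C i).indicator (fun _ => b) x)} ∈ 𝒜 := by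
  classical
  simpa only [Set.indicator_apply, Set.mem_ofPred_eq] using
    setOfPred_membership_mem h𝒜 hC fun T => P (List.ofFn fun i => if i ∈ T then b else 0)

theorem liminf_eq_of_eventually_mem_iff {ι : Type*} {l : Filter ι} [l.NeBot] {A : ι → Set α}
    (h : ∀ x, ∀ᶠ i in l, (x ∈ A i ↔ x ∈ S)) : liminf A l = S := by
  ext x
  rw [mem_liminf_iff_eventually_mem, eventually_congr (h x), eventually_const]

theorem limsup_eq_of_eventually_mem_iff {ι : Type*} {l : Filter ι} [l.NeBot] {A : ι → Set α}
    (h : ∀ x, ∀ᶠ i in l, (x ∈ A i ↔ x ∈ S)) : limsup A l = S := by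
  ext x
  rw [mem_limsup_iff_frequently_mem, frequently_congr (h x), frequently_const]

/-- `S` is guessable from the family `𝒜`: membership of `x` in `S` can be guessed in the limit from
the characteristic values at `x` of some sequence of sets of `𝒜`. For `𝒜` the sets that are both Fσ
and Gδ in Baire space this unfolds to `Delta2Guessable`. -/
def GuessableFrom (𝒜 : Set (Set α)) (S : Set α) : Prop :=
  ∃ C : ℕ → Set α, (∀ n, C n ∈ 𝒜) ∧
    ∃ G : List ℕ → ℕ, ∀ x,
      (x ∈ S → ∀ᶠ n in atTop,
        G (List.ofFn fun i : Fin (n + 1) => (C i).indicator (fun _ => 1) x) = 1) ∧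
      (x ∉ S → ∀ᶠ n in atTop,
        G (List.ofFn fun i : Fin (n + 1) => (C i).indicator (fun _ => 1) x) = 0)

theorem GuessableFrom.exists_eventually_mem_iff (hS : GuessableFrom 𝒜 S) (h𝒜 : IsSetAlgebra 𝒜) :
    ∃ A : ℕ → Set α, (∀ n, A n ∈ 𝒜) ∧ ∀ x, ∀ᶠ n in atTop, (x ∈ A n ↔ x ∈ S) := by
  obtain ⟨C, hC, G, hG⟩ := hS
  refine ⟨fun n => {x | G (List.ofFn fun i : Fin (n + 1) => (C i).indicator (fun _ => 1) x) = 1},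
    fun n => setOfPred_ofFn_indicator_mem h𝒜 (fun i => hC i) 1 (G · = 1), fun x => ?_⟩
  by_cases hx : x ∈ S
  · filter_upwards [(hG x).1 hx] with n hn using iff_of_true hn hx
  · filter_upwards [(hG x).2 hx] with n hn using iff_of_false (hn.trans_ne zero_ne_one) hx

theorem forms_of_delta2Guessable_general (h𝒜 : IsSetAlgebra 𝒜) (hS : GuessableFrom 𝒜 S) :
    ∃ X Y : ℕ → ℕ → Set α,
      (∀ i j, X i j ∈ 𝒜) ∧ (∀ i j, Y i j ∈ 𝒜) ∧
      S = ⋃ i, ⋂ j, X i j ∧ S = ⋂ i, ⋃ j, Y i j := by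
  obtain ⟨A, hA, hAS⟩ := hS.exists_eventually_mem_iff h𝒜
  refine ⟨fun i j => A (j + i), fun i j => A (j + i), fun _ _ => hA _, fun _ _ => hA _, ?_, ?_⟩
  · exact (liminf_eq_of_eventually_mem_iff hAS).symm.trans liminf_eq_iSup_iInf_of_nat'
  · exact (limsup_eq_of_eventually_mem_iff hAS).symm.trans limsup_eq_iInf_iSup_of_nat'

end GuessableFrom

theorem isSetAlgebra_isGδ_compl_and_isGδ (X : Type*) [TopologicalSpace X] :
    IsSetAlgebra {A : Set X | IsGδ Aᶜ ∧ IsGδ A} where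
  empty_mem := by simp
  compl_mem A hA := by simpa using hA.symm
  union_mem A B hA hB := by
    rw [Set.mem_ofPred_eq, Set.compl_union]
    exact ⟨hA.1.inter hB.1, hA.2.union hB.2⟩

theorem isGδ_compl_iff_exists_isClosed {X : Type*} [TopologicalSpace X] {A : Set X} :
    IsGδ Aᶜ ↔ ∃ F : ℕ → Set X, (∀ n, IsClosed (F n)) ∧ A = ⋃ n, F n := by
  rw [isGδ_iff_eq_iInter_nat, compl_surjective.comp_left.exists]
  simp only [Function.comp_apply, isOpen_compl_iff, ← Set.compl_iUnion, compl_inj_iff]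

theorem isFsigmaGdelta_iff {A : Set (ℕ → ℕ)} : IsFsigmaGdelta A ↔ IsGδ Aᶜ ∧ IsGδ A :=
  and_congr isGδ_compl_iff_exists_isClosed.symm isGδ_iff_eq_iInter_nat.symm

theorem isSetAlgebra_isFsigmaGdelta : IsSetAlgebra {A | IsFsigmaGdelta A} := by
  simpa only [isFsigmaGdelta_iff] using isSetAlgebra_isGδ_compl_and_isGδ (ℕ → ℕ)

/-- If `S` is Δ⁰₂-guessable, then `S` is a countable union of countable intersections of
sets that are both Fσ and Gδ, and also a countable intersection of countable unions of
such sets. -/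
theorem forms_of_delta2Guessable (S : Set (ℕ → ℕ)) (hS : Delta2Guessable S) :
    ∃ X Y : ℕ → ℕ → Set (ℕ → ℕ),
      (∀ i j, IsFsigmaGdelta (X i j)) ∧ (∀ i j, IsFsigmaGdelta (Y i j)) ∧
      S = ⋃ i, ⋂ j, X i j ∧ S = ⋂ i, ⋃ j, Y i j :=
  forms_of_delta2Guessable_general isSetAlgebra_isFsigmaGdelta hS
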